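/- Let k be a field of characteristic 2, let m ≥ 3, and let D be the dihedral group of order 2^m. For every s ≥ 0, the group cohomology H^s(D; k) with coefficients in the trivial module k is a k-vector space of dimension s + 1. (This reflects the ring isomorphism H^*(D; k) ≅ k[x₁, y₁, z]/(x₁y₁) with |x₁| = |y₁| = 1 and |z| = 2.) -/

import Mathlib

/-!
Functions on the vertices and the edges of the `q`-gon form an exact sequence
`0 → A → A^V → A^E → A → 0` of representations of its symmetry group; in characteristic `2` the
coboundary needs no signs. Let `O` be the set of the two orientations of the polygon. The group acts
simply transitively on `O × V` and on `O × E`, so for `B = A^V` and `B = A^E` the representation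
`B^O` is coinduced and the connecting maps `H^n(B) → H^(n+1)(B)` of `0 → B → B^O → B → 0` are
isomorphisms. By naturality of these maps, what `A → A^V` and `A^E → A` do on cohomology is decided
in degree `0`: the first is onto, and the second is zero because the number of edges is even.
The long exact sequences through `M = ker (A^E → A)` therefore fall apart and give
`h^(n+1)(A) = h^n(M) + dim A`, `h^0(M) = dim A` and `h^(n+1)(M) = h^n(A) + dim A`.
-/

open CategoryTheory Limits groupCohomology

universe u

section Abelian

variable {C : Type*} [Category* C] [Abelian C] {W X Y Z : C}

theorem shortExact_kernel_ι (g : Y ⟶ Z) [Epi g] :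
    (ShortComplex.mk (kernel.ι g) g (kernel.condition g)).ShortExact where
  exact := ShortComplex.exact_kernel g
  mono_f := inferInstanceAs (Mono (kernel.ι g))
  epi_g := ‹Epi g›

theorem shortExact_kernel_lift {f : W ⟶ X} {d : X ⟶ Y} {g : Y ⟶ Z} {hfd : f ≫ d = 0}
    {hdg : d ≫ g = 0} [Mono f] (hX : (ShortComplex.mk f d hfd).Exact)
    (hY : (ShortComplex.mk d g hdg).Exact) :
    (ShortComplex.mk f (kernel.lift g d hdg)
      (by simp [← cancel_mono (kernel.ι g), hfd])).ShortExact where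
  exact := (ShortComplex.exact_iff_of_epi_of_isIso_of_mono
    { τ₁ := 𝟙 W
      τ₂ := 𝟙 X
      τ₃ := kernel.ι g }).2 hX
  mono_f := ‹Mono f›
  epi_g := (ShortComplex.exact_iff_epi_kernel_lift _).1 hY

end Abelian

section Rank

variable {k G : Type u} [Field k] [Group G] {S : ShortComplex (Rep.{u} k G)}

theorem rank_groupCohomology_zero_of_map_g_eq_zero (hS : S.ShortExact)
    (hg : map (.id G) S.g 0 = 0) :
    Module.rank k (groupCohomology S.X₁ 0) = Module.rank k (groupCohomology S.X₂ 0) := by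
  have := hS.mono_f
  have : Epi (map (.id G) S.f 0) := (mapShortComplex₂_exact hS 0).epi_f hg
  have : IsIso (map (.id G) S.f 0) := isIso_of_mono_of_epi _
  exact (asIso (map (.id G) S.f 0)).toLinearEquiv.rank_eq

theorem rank_groupCohomology_succ_of_map_g_eq_zero (hS : S.ShortExact) {n : ℕ}
    (hn : map (.id G) S.g n = 0) (hn' : map (.id G) S.g (n + 1) = 0) :
    Module.rank k (groupCohomology S.X₁ (n + 1)) =
      Module.rank k (groupCohomology S.X₃ n) + Module.rank k (groupCohomology S.X₂ (n + 1)) :=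
  ModuleCat.free_shortExact_rank_add
    { exact := mapShortComplex₁_exact hS (rfl : n + 1 = n + 1)
      mono_f := (mapShortComplex₃_exact hS (rfl : n + 1 = n + 1)).mono_g hn
      epi_g := (mapShortComplex₂_exact hS (n + 1)).epi_f hn' }

end Rank

section RepGeneral

variable {k G : Type u} [CommRing k] [Group G]

theorem comp_eq_zero_of_function_exact {A B C : Rep.{u} k G} {f : A ⟶ B} {g : B ⟶ C}
    (h : Function.Exact f.hom g.hom) : f ≫ g = 0 :=
  Rep.hom_ext <| Representation.IntertwiningMap.ext <| LinearMap.ext h.apply_apply_eq_zero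

theorem exact_of_function_exact {A B C : Rep.{u} k G} {f : A ⟶ B} {g : B ⟶ C}
    (h : Function.Exact f.hom g.hom) :
    (ShortComplex.mk f g (comp_eq_zero_of_function_exact h)).Exact := by
  rw [← ShortComplex.exact_map_iff_of_faithful _ (forget₂ (Rep.{u} k G) (ModuleCat.{u} k)),
    ShortComplex.moduleCat_exact_iff]
  exact fun x hx => (h x).1 hx

theorem map_zero_eq_comp_invariantsFunctor_map {A B : Rep.{u} k G} (f : A ⟶ B) :
    map (.id G) f 0 = (H0Iso A).hom ≫ (Rep.invariantsFunctor k G).map f ≫ (H0Iso B).inv := by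
  rw [← map_id_comp_H0Iso_hom_assoc, Iso.hom_inv_id, Category.comp_id]

theorem epi_map_zero_of_forall_invariants {A B : Rep.{u} k G} (f : A ⟶ B)
    (h : ∀ b ∈ B.ρ.invariants, ∃ a ∈ A.ρ.invariants, f.hom a = b) :
    Epi (map (.id G) f 0) := by
  have : Epi ((Rep.invariantsFunctor k G).map f) := by
    refine (ModuleCat.epi_iff_surjective _).2 fun b => ?_
    obtain ⟨a, ha, hab⟩ := h b.1 b.2
    exact ⟨⟨a, ha⟩, Subtype.ext hab⟩
  rw [map_zero_eq_comp_invariantsFunctor_map]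
  infer_instance

theorem map_zero_eq_zero_of_forall_invariants {A B : Rep.{u} k G} (f : A ⟶ B)
    (h : ∀ a ∈ A.ρ.invariants, f.hom a = 0) : map (.id G) f 0 = 0 := by
  have : (Rep.invariantsFunctor k G).map f = 0 := by
    refine ModuleCat.hom_ext (LinearMap.ext fun a => Subtype.ext ?_)
    exact h a.1 a.2
  rw [map_zero_eq_comp_invariantsFunctor_map, this, zero_comp, comp_zero]

/-- The hypothesis says that `φ` identifies `A` with the representation coinduced from `M` along the
trivial subgroup, so this is Shapiro's lemma. -/
theorem isZero_groupCohomology_succ_of_bijective {A : Rep.{u} k G} {M : Type u} [AddCommGroup M]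
    [Module k M] (φ : A →ₗ[k] M) (hφ : Function.Bijective fun (a : A) (g : G) => φ (A.ρ g a))
    (n : ℕ) : IsZero (groupCohomology A (n + 1)) := by
  let T : Rep.{u} k (⊥ : Subgroup G) := Rep.trivial k _ M
  let ε : Rep.res (⊥ : Subgroup G).subtype A ⟶ T := Rep.ofHom ⟨φ, fun g => by
    obtain rfl := Subsingleton.elim g 1
    ext a
    simp⟩
  let F := Rep.resCoindToHom (⊥ : Subgroup G).subtype A T ε
  have : Mono F := (Rep.mono_iff_injective _).2 fun a b hab => hφ.1 (congrArg Subtype.val hab)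
  have : Epi F := (Rep.epi_iff_surjective _).2 fun c =>
    let ⟨a, ha⟩ := hφ.2 c.1
    ⟨a, Subtype.ext ha⟩
  have : IsIso F := isIso_of_mono_of_epi F
  exact (isZero_groupCohomology_succ_of_subsingleton T n).of_iso
    ((groupCohomology.functor k G (n + 1)).mapIso (asIso F) ≪≫ coindIso T (n + 1))

end RepGeneral

theorem isPretransitive_of_surjective_smul_prod {G X Y : Type*} [Group G] [MulAction G X]
    [MulAction G Y] {p : X × Y} (hp : Function.Surjective fun g : G => g • p) :
    MulAction.IsPretransitive G Y :=
  (MulAction.isPretransitive_iff_base p.2).2 fun y =>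
    let ⟨g, hg⟩ := hp (p.1, y)
    ⟨g, congrArg Prod.snd hg⟩

section FunctionRep

variable {k G : Type u} [CommRing k] [Group G]

/-- The representation of `G` on the functions `X → V` by `(g • f) x = ρ g (f (g⁻¹ • x))`. -/
def functionRepresentation (X : Type u) [MulAction G X] {V : Type u} [AddCommGroup V] [Module k V]
    (ρ : Representation k G V) : Representation k G (X → V) where
  toFun g := (ρ g).compLeft X ∘ₗ LinearMap.funLeft k V (g⁻¹ • ·)
  map_one' := by
    ext
    simp [LinearMap.funLeft]
  map_mul' g h := by
    ext
    simp [LinearMap.funLeft, mul_smul]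

/-- `functionRepresentation` as an object of `Rep k G`; for finite `X` this is `k[X] ⊗ A`. -/
abbrev functionRep (X : Type u) [MulAction G X] (A : Rep.{u} k G) : Rep.{u} k G :=
  Rep.of (functionRepresentation X A.ρ)

variable (X : Type u) [MulAction G X] {A B : Rep.{u} k G}

theorem functionRep_ρ_apply (g : G) (f : X → A) (x : X) :
    (functionRep X A).ρ g f x = A.ρ g (f (g⁻¹ • x)) :=
  rfl

variable (A) in
/-- The inclusion of `A` into `functionRep X A` as the constant functions. -/
def constHom : A ⟶ functionRep X A :=
  Rep.ofHom ⟨LinearMap.pi fun _ => LinearMap.id, fun _ => rfl⟩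

variable (A) in
/-- The summation map from functions on a finite `G`-set. -/
def sumHom [Fintype X] : functionRep X A ⟶ A :=
  Rep.ofHom ⟨∑ x, LinearMap.proj x, fun g => LinearMap.ext fun f => by
    simpa [functionRepresentation, LinearMap.funLeft] using
      Equiv.sum_comp (MulAction.toPerm g⁻¹) fun x => A.ρ g (f x)⟩

/-- Postcomposition with a morphism, the functoriality of `functionRep X`. -/
def functionRepMap (f : A ⟶ B) : functionRep X A ⟶ functionRep X B :=
  Rep.ofHom ⟨f.hom.toLinearMap.compLeft X, fun g =>
    LinearMap.ext fun _ => funext fun _ => Rep.hom_comm_apply f g _⟩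

variable {X}

theorem sumHom_apply [Fintype X] (f : X → A) : (sumHom X A).hom f = ∑ x, f x :=
  LinearMap.sum_apply _ _ _

theorem constHom_injective [Nonempty X] : Function.Injective (constHom X A).hom :=
  fun _ _ h => congrFun h (Classical.arbitrary X)

theorem sumHom_surjective [Fintype X] [Nonempty X] : Function.Surjective (sumHom X A).hom := by
  classical
  exact fun a => ⟨Pi.single (Classical.arbitrary X) a, (sumHom_apply _).trans (by simp)⟩

theorem sumHom_constHom [Fintype X] (hX : (Fintype.card X : k) = 0) (a : A) :
    (sumHom X A).hom ((constHom X A).hom a) = 0 := by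
  calc
    (sumHom X A).hom ((constHom X A).hom a) = ∑ _x : X, a := sumHom_apply _
    _ = 0 := by
      rw [Finset.sum_const, Finset.card_univ, ← Nat.cast_smul_eq_nsmul k, hX, zero_smul]

theorem functionRep_apply_eq_of_mem_invariants [MulAction.IsPretransitive G X] [A.ρ.IsTrivial]
    {f : X → A} (hf : f ∈ (functionRep X A).ρ.invariants) (x y : X) : f x = f y := by
  obtain ⟨g, rfl⟩ := MulAction.exists_smul_eq G x y
  have := congrFun (hf g) (g • x)
  rwa [functionRep_ρ_apply, inv_smul_smul, Representation.isTrivial_apply] at this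

theorem functionRep_functionRep_apply_eq_of_mem_invariants {Y : Type u} [MulAction G Y]
    [MulAction.IsPretransitive G (X × Y)] [A.ρ.IsTrivial] {f : X → Y → A}
    (hf : f ∈ (functionRep X (functionRep Y A)).ρ.invariants) (x x' : X) (y y' : Y) :
    f x y = f x' y' := by
  obtain ⟨g, hg⟩ := MulAction.exists_smul_eq G (x, y) (x', y')
  obtain ⟨rfl, rfl⟩ := Prod.mk.inj hg
  have := congrFun (congrFun (hf g) (g • x)) (g • y)
  rwa [functionRep_ρ_apply, functionRep_ρ_apply, inv_smul_smul, inv_smul_smul,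
    Representation.isTrivial_apply] at this

theorem epi_map_constHom_zero [MulAction.IsPretransitive G X] [Nonempty X] [A.ρ.IsTrivial] :
    Epi (map (.id G) (constHom X A) 0) :=
  epi_map_zero_of_forall_invariants _ fun f hf => ⟨f (Classical.arbitrary X),
    fun g => A.ρ.isTrivial_apply g _, funext fun x => functionRep_apply_eq_of_mem_invariants hf _ x⟩

theorem map_sumHom_zero_eq_zero [MulAction.IsPretransitive G X] [Nonempty X] [Fintype X]
    [A.ρ.IsTrivial] (hX : (Fintype.card X : k) = 0) :
    map (A := functionRep X A) (.id G) (sumHom X A) 0 = 0 := by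
  refine map_zero_eq_zero_of_forall_invariants _ fun f hf => ?_
  have hconst : f = (constHom X A).hom (f (Classical.arbitrary X)) :=
    funext fun x => functionRep_apply_eq_of_mem_invariants hf x _
  rw [hconst, sumHom_constHom hX]

theorem isZero_groupCohomology_succ_functionRep_functionRep {Y : Type u} [MulAction G Y]
    {p : X × Y} (hp : Function.Bijective fun g : G => g • p) (n : ℕ) :
    IsZero (groupCohomology (functionRep X (functionRep Y A)) (n + 1)) := by
  refine isZero_groupCohomology_succ_of_bijective (M := A)
    (LinearMap.proj p.2 ∘ₗ LinearMap.proj p.1) ?_ n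
  -- `f` goes to `g ↦ ρ g (f (g⁻¹ • p))`, and `g⁻¹ • p` meets every point of `X × Y` exactly once.
  exact ((Equiv.curry X Y A).symm.trans
    ((((Equiv.inv G).trans (.ofBijective _ hp)).symm.arrowCongr (.refl A)).trans
      (.piCongrRight fun g => .ofBijective _ (A.ρ.apply_bijective g)))).bijective

end FunctionRep

theorem add_eq_zero_iff_eq_of_charTwo (k : Type*) [Ring k] [CharP k 2] {M : Type*} [AddCommGroup M]
    [Module k M] {a b : M} : a + b = 0 ↔ a = b := by
  have hb : b + b = 0 := by rw [← two_smul k b, CharTwo.two_eq_zero, zero_smul]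
  rw [← hb, add_left_inj]

section TwoPoint

variable {k G O : Type u} [CommRing k] [CharP k 2] [Group G] [MulAction G O] [Fintype O]

theorem function_exact_constHom_sumHom (hO : Fintype.card O = 2) (A : Rep.{u} k G) :
    Function.Exact (constHom O A).hom (sumHom O A).hom := by
  classical
  obtain ⟨o, p, hop, huniv⟩ := Finset.card_eq_two.1 hO
  have hsum (f : O → A) : (sumHom O A).hom f = f o + f p := by
    rw [sumHom_apply, huniv, Finset.sum_pair hop]
  refine fun f => ⟨fun hf => ⟨f p, funext fun x => ?_⟩, ?_⟩
  · have hfop : f o = f p := (add_eq_zero_iff_eq_of_charTwo k).1 ((hsum f).symm.trans hf)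
    obtain rfl | rfl : x = o ∨ x = p := by simpa [huniv] using Finset.mem_univ x
    · exact hfop.symm
    · rfl
  · rintro ⟨a, rfl⟩
    exact (hsum _).trans ((add_eq_zero_iff_eq_of_charTwo k).2 rfl)

/-- The sequence `A → functionRep O A → A` of constants and sum for a two-element `G`-set `O`. For
`A = k` it represents the class in `H¹(G; k)` of the character `G → Perm O ≃ ℤ/2`. -/
abbrev twoPointComplex (hO : Fintype.card O = 2) (A : Rep.{u} k G) : ShortComplex (Rep.{u} k G) :=
  .mk _ _ (comp_eq_zero_of_function_exact (function_exact_constHom_sumHom hO A))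

theorem twoPointComplex_shortExact (hO : Fintype.card O = 2) (A : Rep.{u} k G) :
    (twoPointComplex hO A).ShortExact :=
  have : Nonempty O := Fintype.card_pos_iff.1 (hO ▸ two_pos)
  { exact := exact_of_function_exact (function_exact_constHom_sumHom hO A)
    mono_f := (Rep.mono_iff_injective _).2 constHom_injective
    epi_g := (Rep.epi_iff_surjective _).2 sumHom_surjective }

/-- The connecting homomorphism of `twoPointComplex`, which plays the role of the cup product with
the class of the character `G → Perm O ≃ ℤ/2`. -/
noncomputable abbrev twoPointδ (hO : Fintype.card O = 2) (A : Rep.{u} k G) (n : ℕ) :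
    groupCohomology A n ⟶ groupCohomology A (n + 1) :=
  δ (twoPointComplex_shortExact hO A) n (n + 1) rfl

theorem twoPointδ_naturality (hO : Fintype.card O = 2) {A B : Rep.{u} k G} (f : A ⟶ B) (n : ℕ) :
    twoPointδ hO A n ≫ map (.id G) f (n + 1) = map (.id G) f n ≫ twoPointδ hO B n :=
  groupCohomology.δ_naturality (twoPointComplex_shortExact hO A) (twoPointComplex_shortExact hO B)
    { τ₁ := f
      τ₂ := functionRepMap O f
      τ₃ := f
      comm₁₂ := rfl
      comm₂₃ := by
        ext v
        exact (sumHom_apply _).trans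
          ((congrArg f.hom (sumHom_apply v)).trans (map_sum _ _ _)).symm }
    n (n + 1) rfl

theorem epi_map_of_epi_map_zero (hO : Fintype.card O = 2) {A B : Rep.{u} k G}
    (hB : ∀ n, Epi (twoPointδ hO B n)) (f : A ⟶ B) (h : Epi (map (.id G) f 0)) (n : ℕ) :
    Epi (map (.id G) f n) := by
  induction n with
  | zero => exact h
  | succ n ih =>
    have := hB n
    exact epi_of_epi_fac (twoPointδ_naturality hO f n)

theorem map_eq_zero_of_map_zero_eq_zero (hO : Fintype.card O = 2) {A B : Rep.{u} k G}
    (hA : ∀ n, Epi (twoPointδ hO A n)) (f : A ⟶ B) (h : map (.id G) f 0 = 0) (n : ℕ) :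
    map (.id G) f n = 0 := by
  induction n with
  | zero => exact h
  | succ n ih =>
    have := hA n
    rw [← cancel_epi (twoPointδ hO A n), twoPointδ_naturality, ih, zero_comp, comp_zero]

variable {X : Type u} [MulAction G X] {A : Rep.{u} k G}

theorem epi_twoPointδ_functionRep (hO : Fintype.card O = 2) {p : O × X}
    (hp : Function.Bijective fun g : G => g • p) (n : ℕ) :
    Epi (twoPointδ hO (functionRep X A) n) :=
  epi_δ_of_isZero _ n (isZero_groupCohomology_succ_functionRep_functionRep hp n)

theorem isIso_twoPointδ_functionRep (hO : Fintype.card O = 2) [A.ρ.IsTrivial] {p : O × X}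
    (hp : Function.Bijective fun g : G => g • p) (n : ℕ) :
    IsIso (twoPointδ hO (functionRep X A) n) := by
  have := epi_twoPointδ_functionRep (A := A) hO hp n
  suffices Mono (twoPointδ hO (functionRep X A) n) from isIso_of_mono_of_epi _
  cases n with
  | zero =>
    refine (mapShortComplex₃_exact (twoPointComplex_shortExact hO (functionRep X A)) rfl).mono_g
      (map_zero_eq_zero_of_forall_invariants _ fun f hf => ?_)
    have : MulAction.IsPretransitive G (O × X) :=
      (MulAction.isPretransitive_iff_base p).2 hp.2
    have hconst : f = (constHom O (functionRep X A)).hom (f p.1) := funext fun o =>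
      funext fun x => functionRep_functionRep_apply_eq_of_mem_invariants hf o p.1 x x
    rw [hconst]
    exact (function_exact_constHom_sumHom hO _).apply_apply_eq_zero _
  | succ n =>
    exact mono_δ_of_isZero _ _ (isZero_groupCohomology_succ_functionRep_functionRep hp n)

end TwoPoint

section TrivialCoefficients

variable {k G O X Y : Type u} [Field k] [CharP k 2] [Group G] [MulAction G O] [Fintype O]
  [MulAction G X] [MulAction G Y] {A M : Rep.{u} k G} [A.ρ.IsTrivial]

theorem rank_groupCohomology_functionRep (hO : Fintype.card O = 2) {p : O × X}
    (hp : Function.Bijective fun g : G => g • p) (n : ℕ) :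
    Module.rank k (groupCohomology (functionRep X A) n) = Module.rank k A := by
  induction n with
  | zero =>
    have := isPretransitive_of_surjective_smul_prod hp.2
    have : Nonempty X := ⟨p.2⟩
    have : Mono (constHom X A) := (Rep.mono_iff_injective _).2 constHom_injective
    have : Epi (map (.id G) (constHom X A) 0) := epi_map_constHom_zero
    have : IsIso (map (.id G) (constHom X A) 0) := isIso_of_mono_of_epi _
    exact ((asIso (map (.id G) (constHom X A) 0)).symm ≪≫ H0IsoOfIsTrivial A).toLinearEquiv.rank_eq
  | succ n ih =>
    have := isIso_twoPointδ_functionRep (A := A) hO hp n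
    exact (asIso (twoPointδ hO (functionRep X A) n)).toLinearEquiv.rank_eq.symm.trans ih

theorem rank_groupCohomology_succ_of_shortExact_constHom (hO : Fintype.card O = 2) {p : O × X}
    (hp : Function.Bijective fun g : G => g • p)
    {π : functionRep X A ⟶ M} {w : constHom X A ≫ π = 0}
    (hπ : (ShortComplex.mk _ π w).ShortExact) (n : ℕ) :
    Module.rank k (groupCohomology A (n + 1)) =
      Module.rank k (groupCohomology M n) + Module.rank k A := by
  have := isPretransitive_of_surjective_smul_prod hp.2
  have : Nonempty X := ⟨p.2⟩
  have hmap_π (n : ℕ) : map (A := functionRep X A) (.id G) π n = 0 := by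
    have : Epi (map (.id G) (constHom X A) n) :=
      epi_map_of_epi_map_zero hO (epi_twoPointδ_functionRep hO hp) _ epi_map_constHom_zero n
    exact zero_of_epi_comp (map (.id G) (constHom X A) n)
      (mapShortComplex₂ (ShortComplex.mk _ π w) n).zero
  exact (rank_groupCohomology_succ_of_map_g_eq_zero hπ (hmap_π n) (hmap_π (n + 1))).trans <|
    congrArg _ (rank_groupCohomology_functionRep hO hp (n + 1))

theorem map_sumHom_eq_zero [Fintype Y] (hY : (Fintype.card Y : k) = 0)
    (hO : Fintype.card O = 2) {p : O × Y} (hp : Function.Bijective fun g : G => g • p) (n : ℕ) :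
    map (A := functionRep Y A) (.id G) (sumHom Y A) n = 0 :=
  have := isPretransitive_of_surjective_smul_prod hp.2
  have : Nonempty Y := ⟨p.2⟩
  map_eq_zero_of_map_zero_eq_zero hO (epi_twoPointδ_functionRep hO hp) _
    (map_sumHom_zero_eq_zero hY) n

theorem rank_groupCohomology_of_shortExact [Fintype Y] (hY : (Fintype.card Y : k) = 0)
    (hO : Fintype.card O = 2) {p : O × X} (hp : Function.Bijective fun g : G => g • p)
    {p' : O × Y} (hp' : Function.Bijective fun g : G => g • p')
    {π : functionRep X A ⟶ M} {ι : M ⟶ functionRep Y A}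
    {wπ : constHom X A ≫ π = 0} {wι : ι ≫ sumHom Y A = 0}
    (hπ : (ShortComplex.mk _ π wπ).ShortExact) (hι : (ShortComplex.mk ι _ wι).ShortExact)
    (n : ℕ) : Module.rank k (groupCohomology A n) = (n + 1) * Module.rank k A := by
  have hsum := map_sumHom_eq_zero (A := A) hY hO hp'
  have hsucc := rank_groupCohomology_succ_of_shortExact_constHom hO hp hπ
  have hM_zero : Module.rank k (groupCohomology M 0) = Module.rank k A :=
    (rank_groupCohomology_zero_of_map_g_eq_zero hι (hsum 0)).trans
      (rank_groupCohomology_functionRep hO hp' 0)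
  have hM_succ (n : ℕ) : Module.rank k (groupCohomology M (n + 1)) =
      Module.rank k (groupCohomology A n) + Module.rank k A :=
    (rank_groupCohomology_succ_of_map_g_eq_zero hι (hsum n) (hsum (n + 1))).trans <|
      congrArg _ (rank_groupCohomology_functionRep hO hp' (n + 1))
  induction n using Nat.twoStepInduction with
  | zero => simpa using (H0IsoOfIsTrivial A).toLinearEquiv.rank_eq
  | one => rw [hsucc, hM_zero]; push_cast; ring
  | more n ih _ => rw [hsucc, hM_succ, ih]; push_cast; ring

theorem rank_groupCohomology_of_exact [Fintype Y] (hY : (Fintype.card Y : k) = 0)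
    (hO : Fintype.card O = 2) {p : O × X} (hp : Function.Bijective fun g : G => g • p)
    {p' : O × Y} (hp' : Function.Bijective fun g : G => g • p')
    {d : functionRep X A ⟶ functionRep Y A} {wX : constHom X A ≫ d = 0}
    {wY : d ≫ sumHom Y A = 0} (hdX : (ShortComplex.mk _ d wX).Exact)
    (hdY : (ShortComplex.mk d _ wY).Exact) (n : ℕ) :
    Module.rank k (groupCohomology A n) = (n + 1) * Module.rank k A := by
  have : Nonempty X := ⟨p.2⟩
  have : Nonempty Y := ⟨p'.2⟩
  have : Mono (constHom X A) := (Rep.mono_iff_injective _).2 constHom_injective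
  have : Epi (sumHom Y A) := (Rep.epi_iff_surjective _).2 sumHom_surjective
  exact rank_groupCohomology_of_shortExact hY hO hp hp' (shortExact_kernel_lift hdX hdY)
    (shortExact_kernel_ι (sumHom Y A)) n

end TrivialCoefficients

section Polygon

theorem apply_eq_of_apply_add_one_eq {q : ℕ} {α : Type*} {f : ZMod q → α}
    (hf : ∀ x, f (x + 1) = f x) (x y : ZMod q) : f x = f y := by
  have hzero (x : ZMod q) : f x = f 0 := by
    obtain ⟨n, rfl⟩ := ZMod.intCast_surjective x
    simpa using Function.Periodic.int_mul_eq hf n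
  rw [hzero x, hzero y]

theorem exists_apply_add_one_eq_add {q : ℕ} [NeZero q] {M : Type*} [AddCommMonoid M]
    {f : ZMod q → M} (hf : ∑ x, f x = 0) : ∃ F : ZMod q → M, ∀ x, F (x + 1) = F x + f x := by
  let S (n : ℕ) : M := ∑ i ∈ Finset.range n, f i
  have hSq : S q = 0 :=
    (Finset.sum_nbij' (t := Finset.univ) (g := f) Nat.cast ZMod.val (fun _ _ => Finset.mem_univ _)
      (fun x _ => Finset.mem_range.2 x.val_lt)
      (fun _ hi => ZMod.val_natCast_of_lt (Finset.mem_range.1 hi))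
      (fun x _ => x.natCast_zmod_val) fun _ _ => rfl).trans hf
  have hS : Function.Periodic S q := fun n => by
    simp only [S, add_comm n q, Finset.sum_range_add, Nat.cast_add, CharP.cast_eq_zero, zero_add]
    exact (congrArg (· + S n) hSq).trans (zero_add _)
  refine ⟨fun x => S x.val, fun x => ?_⟩
  have hval : (x + 1).val = (x.val + 1) % q := by
    rw [ZMod.val_add, ZMod.val_one_eq_one_mod, Nat.add_mod_mod]
  simp only [hval, hS.map_mod_nat]
  simp only [S, Finset.sum_range_succ, ZMod.natCast_zmod_val]

/-- The cells of a fixed dimension `c ∈ {0, 1}` of the regular `q`-gon. For `c = 0` the position `x`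
stands for the vertex `x`, and for `c = 1` for the edge joining the vertices `x` and `x + 1`; on
positions the reflection `sr i` then acts by `x ↦ -x - i - c`. -/
@[ext]
structure PolygonCell (q : ℕ) (c : ZMod q) where
  pos : ZMod q

/-- The two orientations of a polygon, which rotations fix and reflections exchange. -/
inductive PolygonOrientation
  | positive
  | negative
  deriving DecidableEq

instance : Fintype PolygonOrientation where
  elems := {.positive, .negative}
  complete := by rintro (_ | _) <;> decide

variable {q : ℕ}

/-- Cells are numbered by their positions. -/
def polygonCellEquiv (c : ZMod q) : ZMod q ≃ PolygonCell q c where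
  toFun x := ⟨x⟩
  invFun := PolygonCell.pos

instance [NeZero q] (c : ZMod q) : Fintype (PolygonCell q c) := .ofEquiv _ (polygonCellEquiv c)

instance (c : ZMod q) : MulAction (DihedralGroup q) (PolygonCell q c) where
  smul
    | .r i, x => ⟨x.pos + i⟩
    | .sr i, x => ⟨-x.pos - i - c⟩
  one_smul x := PolygonCell.ext (add_zero x.pos)
  mul_smul := by
    rintro (i | i) (j | j) x
    · exact PolygonCell.ext (by change x.pos + (i + j) = x.pos + j + i; ring)
    · exact PolygonCell.ext (by change -x.pos - (j - i) - c = -x.pos - j - c + i; ring)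
    · exact PolygonCell.ext (by change -x.pos - (i + j) - c = -(x.pos + j) - i - c; ring)
    · exact PolygonCell.ext (by change x.pos + (j - i) = -(-x.pos - j - c) - i - c; ring)

instance : MulAction (DihedralGroup q) PolygonOrientation where
  smul
    | .r _, o => o
    | .sr _, .positive => .negative
    | .sr _, .negative => .positive
  one_smul _ := rfl
  mul_smul := by rintro (i | i) (j | j) (_ | _) <;> rfl

theorem card_polygonOrientation : Fintype.card PolygonOrientation = 2 :=
  rfl

theorem card_polygonCell [NeZero q] (c : ZMod q) : Fintype.card (PolygonCell q c) = q :=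
  (Fintype.card_congr (polygonCellEquiv c)).symm.trans (ZMod.card q)

theorem bijective_smul_orientation_cell (c : ZMod q) :
    Function.Bijective fun g : DihedralGroup q =>
      g • (PolygonOrientation.positive, (⟨0⟩ : PolygonCell q c)) := by
  refine Function.bijective_iff_has_inverse.2 ⟨fun
    | (.positive, x) => .r x.pos
    | (.negative, x) => .sr (-x.pos - c), ?_, ?_⟩
  · rintro (i | i)
    · exact congrArg DihedralGroup.r (zero_add i)
    · exact congrArg DihedralGroup.sr (by change -(-0 - i - c) - c = i; ring)
  · rintro ⟨_ | _, x⟩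
    · exact Prod.ext rfl (PolygonCell.ext (zero_add x.pos))
    · exact Prod.ext rfl (PolygonCell.ext (by change -0 - (-x.pos - c) - c = x.pos; ring))

/-- The first endpoint of an edge in the cyclic order of the vertices. -/
def PolygonCell.start (e : PolygonCell q 1) : PolygonCell q 0 := ⟨e.pos⟩

/-- The second endpoint of an edge in the cyclic order of the vertices. -/
def PolygonCell.finish (e : PolygonCell q 1) : PolygonCell q 0 := ⟨e.pos + 1⟩

theorem apply_start_smul_add_apply_finish_smul {M : Type*} [AddCommMonoid M]
    (f : PolygonCell q 0 → M) (g : DihedralGroup q) (e : PolygonCell q 1) :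
    f (g • e).start + f (g • e).finish = f (g • e.start) + f (g • e.finish) := by
  obtain i | i := g
  · have hfinish : (DihedralGroup.r i • e).finish = DihedralGroup.r i • e.finish :=
      PolygonCell.ext (add_right_comm e.pos i 1)
    rw [hfinish]
    rfl
  · have hstart : (DihedralGroup.sr i • e).start = DihedralGroup.sr i • e.finish :=
      PolygonCell.ext (by change -e.pos - i - 1 = -(e.pos + 1) - i - 0; ring)
    have hfinish : (DihedralGroup.sr i • e).finish = DihedralGroup.sr i • e.start :=
      PolygonCell.ext (by change -e.pos - i - 1 + 1 = -e.pos - i - 0; ring)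
    rw [hstart, hfinish, add_comm]

variable {k : Type} [CommRing k]

/-- The cellular coboundary of the `q`-gon with coefficients in `A`, taken without signs and so
correct only in characteristic `2`. -/
def polygonCoboundary (A : Rep.{0} k (DihedralGroup q)) :
    functionRep (PolygonCell q 0) A ⟶ functionRep (PolygonCell q 1) A :=
  Rep.ofHom ⟨LinearMap.funLeft k A PolygonCell.start + LinearMap.funLeft k A PolygonCell.finish,
    fun g => LinearMap.ext fun f => funext fun e =>
      (map_add (A.ρ g) _ _).symm.trans <|
        congrArg (A.ρ g) (apply_start_smul_add_apply_finish_smul f g⁻¹ e).symm⟩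

theorem polygonCoboundary_apply {A : Rep.{0} k (DihedralGroup q)} (f : PolygonCell q 0 → A)
    (e : PolygonCell q 1) :
    (polygonCoboundary A).hom f e = f e.start + f e.finish :=
  rfl

theorem sum_polygonCell [NeZero q] {M : Type*} [AddCommMonoid M] {c : ZMod q}
    (f : PolygonCell q c → M) : ∑ e, f e = ∑ x : ZMod q, f ⟨x⟩ :=
  ((polygonCellEquiv c).sum_comp f).symm

section CharTwo

variable [CharP k 2] {A : Rep.{0} k (DihedralGroup q)}

theorem function_exact_constHom_polygonCoboundary :
    Function.Exact (constHom (PolygonCell q 0) A).hom (polygonCoboundary A).hom := by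
  refine fun f => ⟨fun hf => ⟨f ⟨0⟩, ?_⟩, ?_⟩
  · have hf' (x : ZMod q) : f ⟨x + 1⟩ = f ⟨x⟩ :=
      ((add_eq_zero_iff_eq_of_charTwo k).1 (congrFun hf ⟨x⟩)).symm
    exact funext fun v => apply_eq_of_apply_add_one_eq (f := fun x => f ⟨x⟩) hf' 0 v.pos
  · rintro ⟨a, rfl⟩
    exact funext fun _ => (add_eq_zero_iff_eq_of_charTwo k).2 rfl

theorem function_exact_polygonCoboundary_sumHom [NeZero q] :
    Function.Exact (polygonCoboundary A).hom (sumHom (PolygonCell q 1) A).hom := by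
  refine fun f => ⟨fun hf => ?_, ?_⟩
  · obtain ⟨F, hF⟩ := exists_apply_add_one_eq_add (f := fun x => f ⟨x⟩)
      ((sum_polygonCell f).symm.trans ((sumHom_apply f).symm.trans hf))
    refine ⟨fun v => F v.pos, funext fun e => ?_⟩
    calc
      F e.pos + F (e.pos + 1) = F e.pos + F e.pos + f e := by rw [hF, add_assoc]
      _ = f e := by rw [(add_eq_zero_iff_eq_of_charTwo k).2 rfl, zero_add]
  · rintro ⟨F, rfl⟩
    calc
      (sumHom (PolygonCell q 1) A).hom ((polygonCoboundary A).hom F)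
      _ = ∑ x : ZMod q, (F ⟨x⟩ + F ⟨x + 1⟩) := (sumHom_apply _).trans (sum_polygonCell _)
      _ = ∑ x : ZMod q, F ⟨x⟩ + ∑ x : ZMod q, F ⟨x + 1⟩ := Finset.sum_add_distrib
      _ = 0 := (add_eq_zero_iff_eq_of_charTwo k).2
        (Equiv.sum_comp (Equiv.addRight (1 : ZMod q)) fun x => F ⟨x⟩).symm

end CharTwo

theorem groupCohomology_dihedral_dimensions_general {k : Type} [Field k] [CharP k 2] [NeZero q]
    (hq : Even q) (A : Rep.{0} k (DihedralGroup q)) [A.ρ.IsTrivial] (n : ℕ) :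
    Module.rank k (groupCohomology A n) = (n + 1) * Module.rank k A := by
  have hcard : (Fintype.card (PolygonCell q 1) : k) = 0 := by
    rwa [card_polygonCell, CharP.cast_eq_zero_iff k 2, ← even_iff_two_dvd]
  exact rank_groupCohomology_of_exact hcard card_polygonOrientation
    (bijective_smul_orientation_cell 0) (bijective_smul_orientation_cell 1)
    (exact_of_function_exact function_exact_constHom_polygonCoboundary)
    (exact_of_function_exact function_exact_polygonCoboundary_sumHom) n

end Polygon

/-- For `k` a field of characteristic `2`, `m ≥ 3`, and `D` the dihedral group of order `2^m`
(`DihedralGroup (2^(m-1))`, of order `2 * 2^(m-1) = 2^m`), the group cohomology `H^s(D; k)`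
is a `k`-vector space of dimension `s + 1` for every `s ≥ 0`. -/
theorem groupCohomology_dihedral_dimensions
    (k : Type) [Field k] [CharP k 2] (m : ℕ) (hm : 3 ≤ m) (s : ℕ) :
    Module.finrank k
      (groupCohomology (Rep.trivial k (DihedralGroup (2 ^ (m - 1))) k) s) = s + 1 := by
  have hq : Even (2 ^ (m - 1)) := even_two.pow_of_ne_zero (by omega)
  exact Module.finrank_eq_of_rank_eq (by simp [groupCohomology_dihedral_dimensions_general hq])
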